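/- Let d ≥ 2 be an integer, let n_x < 0 be real, let n_Z be a d×d real symmetric positive definite matrix, and set n := (n_x, n_x·(log(det(−n_Z/n_x)) + d), n_Z) ∈ E and F_r := {y·(log(det(−n_x·n_Z^{-1})), 1, −n_x·n_Z^{-1}) : y ≥ 0} (which equals K_logdet ∩ {n}^⊥). Then for every η > 0 there exists κ > 0 such that for every q ∈ E with ⟨q, n⟩ = 0 and ‖q‖ ≤ η one has dist(q, F_r) ≤ κ · dist(q, K_logdet)^{1/2}. -/

import Mathlib

/-!
The exposing vector `n` is a positive multiple of `(-1, log det M - d, M⁻¹)` with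
`M = -n_x n_Z⁻¹`. After the congruence that moves `M` to the identity, the pairing `s` of a point
`(x, y, Z)` of the cone with that vector is at least `∑ (λ i - y - y log (λ i / y))`, where the
`λ i` are the eigenvalues of the moved matrix. Since `log √w ≤ √w - 1`, each summand is at least
`(√(λ i) - √y) ^ 2` (`sq_sqrt_sub_le`), so on a bounded set `Z` is within `O(√s)` of `y M`
(`trace_shift_sq_le`), and then `x` is within `O(√s)` of `y log det M`
(`exists_residual_bound`). If `q` is orthogonal to `n` and lies at distance `r` from a point of the
cone, that point has `s = O(r)`; hence `dist(q, F_r) = O(√r)` for small `r`, while for `r ≥ 1`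
the bound `dist(q, F_r) ≤ ‖q‖` is enough.
-/

open Matrix Filter

noncomputable section

/-- The space `E = ℝ × ℝ × S^d` (matrix parts are required to be symmetric where relevant). -/
abbrev E (d : ℕ) : Type := ℝ × ℝ × Matrix (Fin d) (Fin d) ℝ

/-- The inner product `⟨(x,y,Z),(x',y',Z')⟩ = x x' + y y' + tr (Z Z')` on `E`. -/
def ip {d : ℕ} (p q : E d) : ℝ := p.1 * q.1 + p.2.1 * q.2.1 + (p.2.2 * q.2.2).trace

/-- The induced norm `‖(x,y,Z)‖ = sqrt (x² + y² + tr (Z²))` on `E`. -/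
def nrm {d : ℕ} (p : E d) : ℝ := Real.sqrt (p.1 ^ 2 + p.2.1 ^ 2 + (p.2.2 * p.2.2).trace)

/-- Distance from a point to a set: `dist(p, S) = inf {‖p - s‖ : s ∈ S}`. -/
def sdist {d : ℕ} (p : E d) (S : Set (E d)) : ℝ := sInf {r : ℝ | ∃ s ∈ S, r = nrm (p - s)}

/-- The log-determinant cone `K_logdet`. -/
def Klogdet (d : ℕ) : Set (E d) :=
  {p | (0 < p.2.1 ∧ p.2.2.PosDef ∧ p.1 ≤ p.2.1 * Real.log ((p.2.1⁻¹ • p.2.2).det))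
    ∨ (p.1 ≤ 0 ∧ p.2.1 = 0 ∧ p.2.2.PosSemidef)}

/-! ### The Frobenius norm and the distance function -/

open scoped Matrix.Norms.Frobenius

lemma frobenius_sq {d : ℕ} (A : Matrix (Fin d) (Fin d) ℝ) :
    ‖A‖ ^ 2 = ∑ i, ∑ j, A i j ^ 2 := by
  rw [frobenius_norm_def, ← Real.sqrt_eq_rpow, Real.sq_sqrt (by positivity)]
  simp

lemma frobenius_sq_of_isSymm {d : ℕ} {A : Matrix (Fin d) (Fin d) ℝ} (hA : A.IsSymm) :
    ‖A‖ ^ 2 = (A * A).trace := by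
  rw [frobenius_sq]
  simp only [trace, diag, mul_apply]
  refine Finset.sum_congr rfl fun i _ => Finset.sum_congr rfl fun j _ => ?_
  rw [hA.apply i j, sq]

lemma abs_trace_le {d : ℕ} (A : Matrix (Fin d) (Fin d) ℝ) : |A.trace| ≤ d * ‖A‖ := by
  have h : ∀ i, |A i i| ≤ ‖A‖ := fun i => by
    refine abs_le_of_sq_le_sq ?_ (norm_nonneg A)
    rw [frobenius_sq]
    exact (Finset.single_le_sum (f := fun j => A i j ^ 2) (fun j _ => sq_nonneg _)
      (Finset.mem_univ i)).trans (Finset.single_le_sum (f := fun k => ∑ j, A k j ^ 2)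
        (fun k _ => Finset.sum_nonneg fun j _ => sq_nonneg _) (Finset.mem_univ i))
  calc |A.trace| ≤ ∑ i, |A i i| := Finset.abs_sum_le_sum_abs _ _
    _ ≤ ∑ _i : Fin d, ‖A‖ := Finset.sum_le_sum fun i _ => h i
    _ = d * ‖A‖ := by simp

lemma nrm_sq {d : ℕ} {p : E d} (hp : p.2.2.IsSymm) :
    nrm p ^ 2 = p.1 ^ 2 + p.2.1 ^ 2 + ‖p.2.2‖ ^ 2 := by
  rw [nrm, ← frobenius_sq_of_isSymm hp, Real.sq_sqrt (by positivity)]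

lemma nrm_nonneg {d : ℕ} (p : E d) : 0 ≤ nrm p := Real.sqrt_nonneg _

lemma abs_fst_le_nrm {d : ℕ} {p : E d} (hp : p.2.2.IsSymm) : |p.1| ≤ nrm p :=
  abs_le_of_sq_le_sq (by rw [nrm_sq hp]; nlinarith [sq_nonneg p.2.1, sq_nonneg ‖p.2.2‖])
    (nrm_nonneg p)

lemma abs_snd_le_nrm {d : ℕ} {p : E d} (hp : p.2.2.IsSymm) : |p.2.1| ≤ nrm p :=
  abs_le_of_sq_le_sq (by rw [nrm_sq hp]; nlinarith [sq_nonneg p.1, sq_nonneg ‖p.2.2‖])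
    (nrm_nonneg p)

lemma norm_mat_le_nrm {d : ℕ} {p : E d} (hp : p.2.2.IsSymm) : ‖p.2.2‖ ≤ nrm p :=
  (sq_le_sq₀ (norm_nonneg _) (nrm_nonneg p)).1
    (by rw [nrm_sq hp]; nlinarith [sq_nonneg p.1, sq_nonneg p.2.1])

lemma nrm_le_add {d : ℕ} {p : E d} (hp : p.2.2.IsSymm) :
    nrm p ≤ |p.1| + |p.2.1| + ‖p.2.2‖ := by
  refine (sq_le_sq₀ (nrm_nonneg p) (by positivity)).1 ?_
  rw [nrm_sq hp, ← sq_abs p.1, ← sq_abs p.2.1]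
  have h1 := abs_nonneg p.1
  have h2 := abs_nonneg p.2.1
  have h3 := norm_nonneg p.2.2
  nlinarith [mul_nonneg h1 h2, mul_nonneg h1 h3, mul_nonneg h2 h3]

lemma sdist_le {d : ℕ} {p s : E d} {S : Set (E d)} (hs : s ∈ S) : sdist p S ≤ nrm (p - s) :=
  csInf_le ⟨0, by rintro _ ⟨t, -, rfl⟩; exact nrm_nonneg _⟩ ⟨s, hs, rfl⟩

lemma sdist_nonneg {d : ℕ} (p : E d) (S : Set (E d)) : 0 ≤ sdist p S :=
  Real.sInf_nonneg (by rintro _ ⟨t, -, rfl⟩; exact nrm_nonneg _)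

lemma isSymm_of_mem_Klogdet {d : ℕ} {p : E d} (hp : p ∈ Klogdet d) : p.2.2.IsSymm := by
  rcases hp with ⟨-, h, -⟩ | ⟨-, -, h⟩
  · simpa [IsHermitian, IsSymm, conjTranspose_eq_transpose_of_trivial] using h.isHermitian
  · simpa [IsHermitian, IsSymm, conjTranspose_eq_transpose_of_trivial] using h.isHermitian

/-! ### The determinant inequality and its gap -/

lemma trace_shift_sq {d : ℕ} {V : Matrix (Fin d) (Fin d) ℝ} (hV : V.IsHermitian) (y : ℝ) :
    ((V - y • 1) * (V - y • 1)).trace = ∑ i, (hV.eigenvalues i - y) ^ 2 := by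
  have hVV : (V * V).trace = ∑ i, hV.eigenvalues i ^ 2 := by
    conv_lhs => rw [hV.spectral_theorem, ← map_mul, Unitary.conjStarAlgAut_apply,
      trace_mul_cycle, Unitary.coe_star_mul_self, one_mul, diagonal_mul_diagonal, trace_diagonal]
    simp [sq]
  have hT : V.trace = ∑ i, hV.eigenvalues i := by simpa using hV.trace_eq_sum_eigenvalues
  have : (V - y • 1) * (V - y • 1) = V * V - (2 * y) • V + (y ^ 2) • 1 := by
    simp only [sub_mul, mul_sub, smul_mul_assoc, mul_smul_comm, one_mul, mul_one]
    module
  rw [this, trace_add, trace_sub, trace_smul, trace_smul, hVV, hT]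
  simp only [sub_sq, Finset.sum_add_distrib, Finset.sum_sub_distrib, smul_eq_mul, trace_one,
    Finset.mul_sum]
  simp
  have h : ∑ i, 2 * y * hV.eigenvalues i = ∑ i, 2 * hV.eigenvalues i * y :=
    Finset.sum_congr rfl fun i _ => by ring
  rw [h]; ring

/-- The scalar inequality behind the exponent `1/2`: `λ - y - y log (λ / y)` dominates
the squared distance between the square roots, because `log √w ≤ √w - 1`. -/
lemma sq_sqrt_sub_le {l y : ℝ} (hl : 0 < l) (hy : 0 < y) :
    (√l - √y) ^ 2 ≤ l - y - y * Real.log (y⁻¹ * l) := by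
  obtain ⟨a, ha, rfl⟩ : ∃ a, 0 < a ∧ l = a ^ 2 :=
    ⟨√l, Real.sqrt_pos.2 hl, (Real.sq_sqrt hl.le).symm⟩
  obtain ⟨b, hb, rfl⟩ : ∃ b, 0 < b ∧ y = b ^ 2 :=
    ⟨√y, Real.sqrt_pos.2 hy, (Real.sq_sqrt hy.le).symm⟩
  rw [Real.sqrt_sq ha.le, Real.sqrt_sq hb.le]
  have h1 : (b ^ 2)⁻¹ * a ^ 2 = (a / b) ^ 2 := by field_simp
  have h2 := Real.log_le_sub_one_of_pos (div_pos ha hb)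
  have h3 : b ^ 2 * (a / b - 1) = a * b - b ^ 2 := by field_simp
  rw [h1, Real.log_pow]
  push_cast
  nlinarith [mul_le_mul_of_nonneg_left h2 (sq_nonneg b)]

/-- Quantitative form of the strict convexity of `-log det` at the identity: the gap `s` in
`y log det (V / y) ≤ tr V - d y` controls the squared distance of `V` to `y • 1`. In the case `y = 0` the gap is just the trace,
matching the part of the cone in the hyperplane `y = 0`. -/
lemma trace_shift_sq_le {d : ℕ} {V : Matrix (Fin d) (Fin d) ℝ} {y s : ℝ}
    (h : (y = 0 ∧ V.PosSemidef ∧ V.trace ≤ s) ∨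
      (0 < y ∧ V.PosDef ∧ V.trace - d * y - y * Real.log (y⁻¹ • V).det ≤ s)) :
    0 ≤ s ∧ ((V - y • 1) * (V - y • 1)).trace ≤ s * (2 * (V.trace + y)) := by
  have hV : V.PosSemidef := by
    rcases h with ⟨-, h, -⟩ | ⟨-, h, -⟩
    exacts [h, h.posSemidef]
  have hy : 0 ≤ y := by rcases h with ⟨h, -⟩ | ⟨h, -⟩ <;> linarith
  set l := hV.isHermitian.eigenvalues with hl
  have hl0 : ∀ i, 0 ≤ l i := hV.eigenvalues_nonneg
  have hT : V.trace = ∑ i, l i := by simpa using hV.isHermitian.trace_eq_sum_eigenvalues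
  have key : ∑ i, (√(l i) - √y) ^ 2 ≤ s := by
    rcases h with ⟨rfl, -, h⟩ | ⟨hy', hpd, h⟩
    · refine le_of_eq_of_le ?_ h
      rw [hT]
      exact Finset.sum_congr rfl fun i _ => by simp [Real.sq_sqrt (hl0 i)]
    · have hlpos : ∀ i, 0 < l i := hpd.eigenvalues_pos
      have hdet : Real.log (y⁻¹ • V).det = ∑ i, Real.log (y⁻¹ * l i) := by
        rw [det_smul, hV.isHermitian.det_eq_prod_eigenvalues, ← Real.log_prod
          (fun i _ => (mul_pos (inv_pos.2 hy') (hlpos i)).ne'), Finset.prod_mul_distrib]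
        simp [hl]
      refine le_trans (Finset.sum_le_sum fun i _ => sq_sqrt_sub_le (hlpos i) hy') ?_
      refine le_of_eq_of_le ?_ h
      rw [hdet, hT]
      simp [Finset.sum_sub_distrib, Finset.mul_sum]
  refine ⟨(Finset.sum_nonneg fun i _ => sq_nonneg _).trans key, ?_⟩
  have hterm : ∀ i, (l i - y) ^ 2 ≤ (√(l i) - √y) ^ 2 * (2 * (V.trace + y)) := fun i => by
    have hli : l i ≤ V.trace := by
      rw [hT]; exact Finset.single_le_sum (fun j _ => hl0 j) (Finset.mem_univ i)
    have e1 := Real.sq_sqrt (hl0 i)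
    have e2 := Real.sq_sqrt hy
    have e3 : (l i - y) ^ 2 = (√(l i) - √y) ^ 2 * (√(l i) + √y) ^ 2 := by
      conv_lhs => rw [← e1, ← e2]
      ring
    rw [e3]
    refine mul_le_mul_of_nonneg_left ?_ (sq_nonneg _)
    nlinarith [sq_nonneg (√(l i) - √y)]
  rw [trace_shift_sq hV.isHermitian]
  have hnn : 0 ≤ 2 * (V.trace + y) := by linarith [hV.trace_nonneg]
  calc ∑ i, (l i - y) ^ 2 ≤ ∑ i, (√(l i) - √y) ^ 2 * (2 * (V.trace + y)) :=
        Finset.sum_le_sum fun i _ => hterm i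
    _ = (∑ i, (√(l i) - √y) ^ 2) * (2 * (V.trace + y)) := by rw [Finset.sum_mul]
    _ ≤ _ := mul_le_mul_of_nonneg_right key hnn

/-! ### Residuals of points of the cone -/

/-- A bounded point of the cone is within `O(√s)` of the ray through `(L, 1, D * Dᵀ)`,
`L = log det (D * Dᵀ)`, where `s` is its pairing with the (normalized) exposing vector
`(-1, L - d, Cᵀ * C)`. The congruence `Z ↦ C * Z * Cᵀ` moves `D * Dᵀ` to the identity. -/
lemma exists_residual_bound {d : ℕ} (C D : Matrix (Fin d) (Fin d) ℝ) (hDC : D * C = 1)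
    (R S : ℝ) (hR : 0 ≤ R) :
    ∃ A : ℝ, 0 ≤ A ∧ ∀ p ∈ Klogdet d, p.2.1 ≤ R → ‖p.2.2‖ ≤ R → ∀ s,
      s = -p.1 + p.2.1 * (Real.log (D * Dᵀ).det - d) + (Cᵀ * C * p.2.2).trace → s ≤ S →
      0 ≤ s ∧ 0 ≤ p.2.1 ∧ |p.1 - p.2.1 * Real.log (D * Dᵀ).det| ≤ A * √s ∧
        ‖p.2.2 - p.2.1 • (D * Dᵀ)‖ ≤ A * √s := by
  have hCD : C * D = 1 := mul_eq_one_comm.1 hDC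
  set B : ℝ := √(2 * (d * (‖Cᵀ * C‖ * R) + R)) with hB
  refine ⟨d * B + √S + ‖D‖ * B * ‖Dᵀ‖, by positivity, ?_⟩
  rintro ⟨x, y, Z⟩ hp hyR hZR s hs hsS
  simp only at hyR hZR hs ⊢
  have hDet : C.det * D.det = 1 := by rw [← det_mul, hCD, det_one]
  have hCdet : C.det ≠ 0 := left_ne_zero_of_mul_eq_one hDet
  have hDdet : D.det ≠ 0 := right_ne_zero_of_mul_eq_one hDet
  set L := Real.log (D * Dᵀ).det with hL
  set V := C * Z * Cᵀ with hV
  have hDCt : Cᵀ * Dᵀ = 1 := by rw [← transpose_mul, hDC, transpose_one]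
  have hZV : Z = D * V * Dᵀ := by
    calc Z = (D * C) * Z * (Cᵀ * Dᵀ) := by rw [hDC, hDCt]; simp
      _ = _ := by simp only [hV, Matrix.mul_assoc]
  have htr : (Cᵀ * C * Z).trace = V.trace := by
    rw [hV, trace_mul_comm, ← Matrix.mul_assoc, trace_mul_comm, Matrix.mul_assoc]
  have hy0 : 0 ≤ y := by
    rcases hp with ⟨h, -⟩ | ⟨-, h, -⟩
    exacts [le_of_lt h, h.ge]
  have hcase : (y = 0 ∧ V.PosSemidef ∧ V.trace ≤ s) ∨
      (0 < y ∧ V.PosDef ∧ V.trace - d * y - y * Real.log (y⁻¹ • V).det ≤ s) := by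
    rcases hp with ⟨hy, hZ, hx⟩ | ⟨hx, hy, hZ⟩
    · simp only at hy hZ hx
      refine Or.inr ⟨hy, ?_, ?_⟩
      · have := hZ.mul_mul_conjTranspose_same (B := C)
          (vecMul_injective_of_isUnit ((isUnit_iff_isUnit_det C).2 hCdet.isUnit))
        rwa [conjTranspose_eq_transpose_of_trivial] at this
      · have hdV : (y⁻¹ • Z).det = (D * Dᵀ).det * (y⁻¹ • V).det := by
          conv_lhs => rw [hZV]
          simp only [det_smul, det_mul, det_transpose]
          ring
        have hVdet : (y⁻¹ • V).det ≠ 0 := by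
          rw [hV, det_smul, det_mul, det_mul, det_transpose]
          have := hZ.det_pos
          positivity
        rw [hdV, Real.log_mul (by simp [hDdet]) hVdet, ← hL] at hx
        rw [hs, htr]
        linarith
    · simp only at hy hZ hx
      subst hy
      refine Or.inl ⟨rfl, ?_, ?_⟩
      · have := hZ.mul_mul_conjTranspose_same C
        rwa [conjTranspose_eq_transpose_of_trivial] at this
      · rw [hs, htr]; linarith
  obtain ⟨hs0, hsq⟩ := trace_shift_sq_le hcase
  have hZs : Z.IsSymm := isSymm_of_mem_Klogdet hp
  have hVs : (V - y • 1).IsSymm := by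
    simp [IsSymm, hV, transpose_mul, hZs.eq, Matrix.mul_assoc]
  have htrV : V.trace ≤ d * (‖Cᵀ * C‖ * R) := by
    rw [← htr]
    refine (le_abs_self _).trans ((abs_trace_le _).trans ?_)
    gcongr
    exact (frobenius_norm_mul _ _).trans (by gcongr)
  have hVn : ‖V - y • 1‖ ≤ B * √s := by
    rw [hB, ← Real.sqrt_mul (by positivity)]
    apply Real.le_sqrt_of_sq_le
    rw [frobenius_sq_of_isSymm hVs]
    nlinarith
  have hsS' : s ≤ √S * √s := by
    calc s = √s * √s := (Real.mul_self_sqrt hs0).symm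
      _ ≤ _ := by gcongr
  refine ⟨hs0, hy0, ?_, ?_⟩
  · have hx : x - y * L = (V - y • (1 : Matrix (Fin d) (Fin d) ℝ)).trace - s := by
      rw [hs, htr, trace_sub, trace_smul, trace_one]
      simp; ring
    rw [hx]
    calc _ ≤ |(V - y • (1 : Matrix (Fin d) (Fin d) ℝ)).trace| + |s| := abs_sub _ _
      _ ≤ d * (B * √s) + √S * √s := by
        rw [abs_of_nonneg hs0]
        exact add_le_add ((abs_trace_le _).trans (by gcongr)) hsS'
      _ ≤ _ := by nlinarith [show 0 ≤ ‖D‖ * B * ‖Dᵀ‖ * √s by positivity]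
  · have : Z - y • (D * Dᵀ) = D * (V - y • 1) * Dᵀ := by
      conv_lhs => rw [hZV]
      simp [mul_sub, sub_mul]
    rw [this]
    calc _ ≤ ‖D‖ * (B * √s) * ‖Dᵀ‖ := by
          refine (frobenius_norm_mul _ _).trans ?_
          gcongr
          exact (frobenius_norm_mul _ _).trans (by gcongr)
      _ ≤ _ := by nlinarith [show 0 ≤ d * B * √s by positivity, show 0 ≤ √S * √s by positivity]

section

-- The factorization is taken from the C⋆-algebra structure on matrices, which needs these instances.
open scoped MatrixOrder Matrix.Norms.L2Operator

lemma exists_factor {d : ℕ} {N : Matrix (Fin d) (Fin d) ℝ} (hN : N.PosDef) :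
    ∃ C D : Matrix (Fin d) (Fin d) ℝ, D * C = 1 ∧ N = Cᵀ * C ∧ N⁻¹ = D * Dᵀ := by
  obtain ⟨C, hC, rfl⟩ := CStarAlgebra.isStrictlyPositive_iff_eq_star_mul_self.mp
    hN.isStrictlyPositive
  have hu : IsUnit C.det := (isUnit_iff_isUnit_det C).1 hC
  have hst : star C = Cᵀ := by
    rw [star_eq_conjTranspose, conjTranspose_eq_transpose_of_trivial]
  refine ⟨C, C⁻¹, nonsing_inv_mul _ hu, by rw [hst], ?_⟩
  rw [hst, Matrix.mul_inv_rev, transpose_nonsing_inv]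

end

/-- Theorem 3.6 (Hölderian error bound concerning `F_r`): for
`n = (n_x, n_x (log det (-n_Z/n_x) + d), n_Z)` with `n_x < 0`, `n_Z ≻ 0`, and any `η > 0` there
is `κ > 0` with `dist(q, F_r) ≤ κ dist(q, K_logdet)^(1/2)` for all `q ∈ {n}^⊥`, `‖q‖ ≤ η`. -/
theorem stmt_18 (d : ℕ) (hd : 2 ≤ d) (nx : ℝ) (hnx : nx < 0)
    (nZ : Matrix (Fin d) (Fin d) ℝ) (hnZ : nZ.PosDef) :
    ∀ η : ℝ, 0 < η → ∃ κ : ℝ, 0 < κ ∧ ∀ q : E d, q.2.2.IsSymm →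
      ip q (nx, nx * (Real.log (((-(nx⁻¹)) • nZ).det) + d), nZ) = 0 → nrm q ≤ η →
      sdist q {p : E d | ∃ y : ℝ, 0 ≤ y ∧
          p = y • ((Real.log (((-nx) • nZ⁻¹).det), 1, (-nx) • nZ⁻¹) : E d)}
        ≤ κ * sdist q (Klogdet d) ^ ((1 : ℝ) / 2) := by
  intro η hη
  have ha : 0 < -nx⁻¹ := neg_pos.2 (inv_lt_zero.2 hnx)
  obtain ⟨C, D, hDC, hN, hM⟩ := exists_factor (hnZ.smul ha)
  have hM' : (-nx) • nZ⁻¹ = D * Dᵀ := by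
    rw [← hM]
    have hu : IsUnit nZ.det := hnZ.det_pos.ne'.isUnit
    refine (inv_eq_left_inv ?_).symm
    rw [smul_mul_smul_comm, nonsing_inv_mul _ hu]
    simp [hnx.ne]
  have hDet : D.det * C.det = 1 := by rw [← det_mul, hDC, det_one]
  set L := Real.log (D * Dᵀ).det with hL
  have hlogN : Real.log (Cᵀ * C).det = -L := by
    rw [hL, ← Real.log_inv]
    congr 1
    refine eq_inv_of_mul_eq_one_left ?_
    simp only [det_mul, det_transpose]
    linear_combination (D.det * C.det + 1) * hDet
  rw [hM', hN, hlogN, ← hL]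
  set G : ℝ := 1 + |L - d| + d * ‖Cᵀ * C‖ with hG
  have hG0 : 0 ≤ G := by positivity
  obtain ⟨A, hA0, hA⟩ := exists_residual_bound C D hDC (η + 1) G (by positivity)
  refine ⟨3 + 2 * A * √G + η, by positivity, ?_⟩
  rintro ⟨u, v, W⟩ hW hip hq
  simp only at hW
  set κ := 3 + 2 * A * √G + η with hκ
  have hκ0 : 0 < κ := by positivity
  set q : E d := (u, v, W) with hqdef
  set F : Set (E d) := {p : E d | ∃ y : ℝ, 0 ≤ y ∧ p = y • ((L, 1, D * Dᵀ) : E d)} with hF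
  have hnZ' : nZ = (-nx) • (Cᵀ * C) := by
    rw [← hN, smul_smul]; simp [hnx.ne]
  have hq0 : -u + v * (L - d) + (Cᵀ * C * W).trace = 0 := by
    have h : u * nx + v * (nx * (-L + d)) + (W * nZ).trace = 0 := hip
    rw [hnZ', mul_smul_comm, trace_smul, trace_mul_comm, smul_eq_mul] at h
    have : (-nx) * (-u + v * (L - d) + (Cᵀ * C * W).trace) = 0 := by linarith
    exact (mul_eq_zero.1 this).resolve_left (by linarith)
  -- It suffices to compare with the distance to each individual point of the cone.
  have main : ∀ p ∈ Klogdet d, sdist q F ≤ κ * √(nrm (q - p)) := by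
    intro p hp
    have hps := isSymm_of_mem_Klogdet hp
    obtain ⟨x, y, Z⟩ := p
    simp only at hps
    set r := nrm (q - (x, y, Z)) with hr
    have hr0 : 0 ≤ r := nrm_nonneg _
    have hκη : η ≤ κ := by
      have : 0 ≤ A * √G := by positivity
      linarith
    rcases le_total 1 r with h1 | h1
    · have h0 : (0 : E d) ∈ F := ⟨0, le_rfl, by simp⟩
      have h2 : sdist q F ≤ η := (sdist_le h0).trans (by simpa using hq)
      have h3 : 1 ≤ √r := Real.one_le_sqrt.2 h1
      nlinarith
    have hsub : (q - (x, y, Z)).2.2.IsSymm := hW.sub hps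
    have hx : |u - x| ≤ r := abs_fst_le_nrm (p := q - (x, y, Z)) hsub
    have hy : |v - y| ≤ r := abs_snd_le_nrm (p := q - (x, y, Z)) hsub
    have hZ : ‖W - Z‖ ≤ r := norm_mat_le_nrm (p := q - (x, y, Z)) hsub
    have hv : |v| ≤ η := (abs_snd_le_nrm (p := q) hW).trans hq
    have hWn : ‖W‖ ≤ η := (norm_mat_le_nrm (p := q) hW).trans hq
    set s := -x + y * (L - d) + (Cᵀ * C * Z).trace with hs
    -- `q` is orthogonal to the exposing vector, so the residual of the cone point is `O(r)`.
    have hsr : s ≤ G * r := by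
      have e : s = (u - x) + (-(v - y) * (L - d)) + -(Cᵀ * C * (W - Z)).trace := by
        rw [Matrix.mul_sub, trace_sub, hs]; linarith
      have t1 : u - x ≤ r := (le_abs_self _).trans hx
      have t2 : -(v - y) * (L - d) ≤ r * |L - d| := by
        refine (le_abs_self _).trans ?_
        rw [abs_mul, abs_neg]
        gcongr
      have t3 : -(Cᵀ * C * (W - Z)).trace ≤ d * (‖Cᵀ * C‖ * r) := by
        refine (neg_le_abs _).trans ((abs_trace_le _).trans ?_)
        gcongr
        exact (frobenius_norm_mul _ _).trans (by gcongr)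
      rw [e, hG]
      linarith
    have hyb : y ≤ η + 1 := by
      linarith [(abs_le.1 hy).1, (abs_le.1 hv).2]
    have hZb : ‖Z‖ ≤ η + 1 := by
      have : ‖Z‖ ≤ ‖W‖ + ‖W - Z‖ := norm_le_norm_add_norm_sub _ _
      linarith
    obtain ⟨hs0, hy0, b1, b2⟩ := hA (x, y, Z) hp hyb hZb s rfl
      (hsr.trans (by nlinarith))
    simp only [← hL] at b1 b2
    have hsq : √s ≤ √G * √r := by
      rw [← Real.sqrt_mul hG0]
      exact Real.sqrt_le_sqrt hsr
    have hrr : r ≤ √r := by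
      apply Real.le_sqrt_of_sq_le; nlinarith
    have hf : y • ((L, 1, D * Dᵀ) : E d) ∈ F := ⟨y, hy0, rfl⟩
    have hMs : (D * Dᵀ).IsSymm := by simp [IsSymm]
    have hsub' : (q - y • ((L, 1, D * Dᵀ) : E d)).2.2.IsSymm := hW.sub (hMs.smul y)
    have c0 : nrm (q - y • ((L, 1, D * Dᵀ) : E d)) ≤
        |u - y * L| + |v - y * 1| + ‖W - y • (D * Dᵀ)‖ := nrm_le_add hsub'
    have c1 : |u - y * L| ≤ |u - x| + |x - y * L| := abs_sub_le _ _ _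
    have c2 : ‖W - y • (D * Dᵀ)‖ ≤ ‖W - Z‖ + ‖Z - y • (D * Dᵀ)‖ := norm_sub_le_norm_sub_add_norm_sub _ _ _
    rw [mul_one] at c0
    have c3 : A * √s ≤ A * (√G * √r) := by gcongr
    have c4 : 0 ≤ η * √r := by positivity
    refine (sdist_le hf).trans ?_
    have c5 : κ * √r = 3 * √r + 2 * (A * (√G * √r)) + η * √r := by rw [hκ]; ring
    linarith
  rw [← Real.sqrt_eq_rpow]
  have hle : (sdist q F / κ) ^ 2 ≤ sdist q (Klogdet d) := by
    refine le_csInf ⟨_, 0, Or.inr ⟨le_rfl, rfl, PosSemidef.zero⟩, rfl⟩ ?_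
    rintro _ ⟨p, hp, rfl⟩
    have h := main p hp
    rw [← div_le_iff₀' hκ0] at h
    calc _ ≤ √(nrm (q - p)) ^ 2 := by
          have := div_nonneg (sdist_nonneg q F) hκ0.le
          gcongr
      _ = _ := Real.sq_sqrt (nrm_nonneg _)
  rw [← div_le_iff₀' hκ0]
  exact Real.le_sqrt_of_sq_le hle
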